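/- Fix real numbers 0 < β₀ < β_w, and for θ > 0 define A(θ) = β₀·((β₀+θ)²/2 + (β_w+θ)³/(2(β₀+θ))), B(θ) = (3/2)(β₀ - β_w)(β₀ + β_w + θ) - β₀·(β₀ + θ + (β_w+θ)²/(β₀+θ)), C(θ) = 2(β_w - β₀) + β₀·(1 + (β_w+θ)/(β₀+θ)). Then: (i) every real root v of A(θ)v² + B(θ)v + C(θ) = 0 satisfies 0 < v ≤ -B(θ)/A(θ); and (ii) -B(θ)/A(θ) → 0 as θ → ∞. In particular, the roots of the quadratic tend to 0 as θ → ∞. -/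

import Mathlib

open Filter

/-- Coefficient A(θ) of the quadratic approximation (equation (26)). -/
noncomputable def coeffA (β₀ βw θ : ℝ) : ℝ :=
  β₀ * ((β₀ + θ) ^ 2 / 2 + (βw + θ) ^ 3 / (2 * (β₀ + θ)))

/-- Coefficient B(θ) of the quadratic approximation (equation (26)). -/
noncomputable def coeffB (β₀ βw θ : ℝ) : ℝ :=
  (3 / 2) * (β₀ - βw) * (β₀ + βw + θ) - β₀ * (β₀ + θ + (βw + θ) ^ 2 / (β₀ + θ))

/-- Coefficient C(θ) of the quadratic approximation (equation (26)). -/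
noncomputable def coeffC (β₀ βw θ : ℝ) : ℝ :=
  2 * (βw - β₀) + β₀ * (1 + (βw + θ) / (β₀ + θ))

/-!
A root `v` of `A v² + B v + C` satisfies `v (A v + B) = -C`. Since `A` and `C` are positive and `B`
is nonpositive, this forces `v` and `A v + B` to have opposite signs with `v` the positive one,
whence `0 < v < -B / A`. For the limit, put `s = β₀ + θ` and `r = (βw + θ) / s`. Then `A / s²` and
`B / s` are polynomials in `r` and `s⁻¹`, so they converge as `r → 1` and `s⁻¹ → 0`; the limit of
`A / s²` is `β₀ ≠ 0`, and `B / A` therefore decays like `s⁻¹`.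
-/

lemma mem_Ioo_of_quadratic_eq_zero {K : Type*} [Field K] [LinearOrder K] [IsStrictOrderedRing K]
    {a b c v : K} (ha : 0 < a) (hb : b ≤ 0) (hc : 0 < c) (hv : a * v ^ 2 + b * v + c = 0) :
    v ∈ Set.Ioo 0 (-b / a) := by
  have hprod : v * (a * v + b) < 0 := by linear_combination hv + hc
  rcases mul_neg_iff.mp hprod with ⟨hpos, hlt⟩ | ⟨hneg, hgt⟩
  · refine ⟨hpos, (lt_div_iff₀ ha).mpr ?_⟩
    linarith
  · linarith [mul_neg_of_pos_of_neg ha hneg]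

lemma coeffA_pos {β₀ βw θ : ℝ} (hβ₀ : 0 < β₀) (hβ₀θ : 0 < β₀ + θ) (hβwθ : 0 ≤ βw + θ) :
    0 < coeffA β₀ βw θ := by
  unfold coeffA
  positivity

lemma coeffB_neg {β₀ βw θ : ℝ} (hβ₀ : 0 < β₀) (hβw : β₀ ≤ βw) (hβ₀θ : 0 < β₀ + θ) :
    coeffB β₀ βw θ < 0 := by
  have hfirst : (3 / 2) * (β₀ - βw) * (β₀ + βw + θ) ≤ 0 :=
    mul_nonpos_of_nonpos_of_nonneg (by linarith) (by linarith)
  have hsecond : 0 < β₀ * (β₀ + θ + (βw + θ) ^ 2 / (β₀ + θ)) := by positivity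
  exact sub_neg.mpr (hfirst.trans_lt hsecond)

lemma coeffC_pos {β₀ βw θ : ℝ} (hβ₀ : 0 < β₀) (hβw : β₀ ≤ βw) (hβ₀θ : 0 < β₀ + θ) :
    0 < coeffC β₀ βw θ := by
  have hβwθ : 0 < βw + θ := by linarith
  exact add_pos_of_nonneg_of_pos (by linarith) (by positivity)

lemma tendsto_inv_const_add_atTop (x : ℝ) :
    Tendsto (fun θ : ℝ => (x + θ)⁻¹) atTop (nhds 0) :=
  tendsto_inv_atTop_zero.comp (tendsto_atTop_add_const_left atTop x tendsto_id)

lemma tendsto_const_add_div_const_add_atTop (x y : ℝ) :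
    Tendsto (fun θ : ℝ => (x + θ) / (y + θ)) atTop (nhds 1) := by
  have hlim : Tendsto (fun θ : ℝ => 1 + (x - y) * (y + θ)⁻¹) atTop (nhds (1 + (x - y) * 0)) :=
    ((tendsto_inv_const_add_atTop y).const_mul (x - y)).const_add 1
  rw [mul_zero, add_zero] at hlim
  refine hlim.congr' ?_
  filter_upwards [eventually_gt_atTop (-y)] with θ hθ
  have hne : y + θ ≠ 0 := by linarith
  field_simp
  ring

lemma tendsto_coeffA_div_sq_atTop (β₀ βw : ℝ) :
    Tendsto (fun θ : ℝ => coeffA β₀ βw θ / (β₀ + θ) ^ 2) atTop (nhds β₀) := by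
  have hlim : Tendsto (fun θ : ℝ => β₀ / 2 * (1 + ((βw + θ) / (β₀ + θ)) ^ 3)) atTop
      (nhds (β₀ / 2 * (1 + 1 ^ 3))) :=
    (((tendsto_const_add_div_const_add_atTop βw β₀).pow 3).const_add 1).const_mul (β₀ / 2)
  convert hlim.congr' ?_ using 2
  · ring
  filter_upwards [eventually_gt_atTop (-β₀)] with θ hθ
  have hne : β₀ + θ ≠ 0 := by linarith
  unfold coeffA
  field_simp

lemma tendsto_coeffB_div_atTop (β₀ βw : ℝ) :
    Tendsto (fun θ : ℝ => coeffB β₀ βw θ / (β₀ + θ)) atTop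
      (nhds (3 / 2 * (β₀ - βw) - 2 * β₀)) := by
  have hlim : Tendsto
      (fun θ : ℝ => 3 / 2 * (β₀ - βw) * (1 + βw * (β₀ + θ)⁻¹)
        - β₀ * (1 + ((βw + θ) / (β₀ + θ)) ^ 2)) atTop
      (nhds (3 / 2 * (β₀ - βw) * (1 + βw * 0) - β₀ * (1 + 1 ^ 2))) :=
    ((((tendsto_inv_const_add_atTop β₀).const_mul βw).const_add 1).const_mul _).sub
      ((((tendsto_const_add_div_const_add_atTop βw β₀).pow 2).const_add 1).const_mul β₀)
  convert hlim.congr' ?_ using 2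
  · ring
  filter_upwards [eventually_gt_atTop (-β₀)] with θ hθ
  have hne : β₀ + θ ≠ 0 := by linarith
  unfold coeffB
  field_simp
  ring

lemma tendsto_neg_coeffB_div_coeffA_atTop {β₀ : ℝ} (hβ₀ : β₀ ≠ 0) (βw : ℝ) :
    Tendsto (fun θ : ℝ => -coeffB β₀ βw θ / coeffA β₀ βw θ) atTop (nhds 0) := by
  have hlim := ((tendsto_coeffB_div_atTop β₀ βw).neg.div
    (tendsto_coeffA_div_sq_atTop β₀ βw) hβ₀).mul (tendsto_inv_const_add_atTop β₀)
  rw [mul_zero] at hlim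
  refine hlim.congr' ?_
  filter_upwards [eventually_gt_atTop (-β₀)] with θ hθ
  have hne : β₀ + θ ≠ 0 := by linarith
  simp only [Pi.div_apply]
  field_simp

/-- Lemma 1 of the paper: every root v of the quadratic A(θ)v² + B(θ)v + C(θ) satisfies
0 < v ≤ -B(θ)/A(θ), and -B(θ)/A(θ) → 0 as θ → ∞, so the roots (hence the optimal
threshold distance) tend to 0 as the SINR threshold grows. -/
theorem optimal_threshold_decreasing
    (β₀ βw : ℝ) (hβ₀ : 0 < β₀) (hβw : β₀ < βw) :
    (∀ θ : ℝ, 0 < θ → ∀ v : ℝ,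
        coeffA β₀ βw θ * v ^ 2 + coeffB β₀ βw θ * v + coeffC β₀ βw θ = 0 →
        0 < v ∧ v ≤ -coeffB β₀ βw θ / coeffA β₀ βw θ) ∧
    Tendsto (fun θ : ℝ => -coeffB β₀ βw θ / coeffA β₀ βw θ) atTop (nhds 0) := by
  refine ⟨fun θ hθ v hv => ?_, tendsto_neg_coeffB_div_coeffA_atTop hβ₀.ne' βw⟩
  have hβ₀θ : 0 < β₀ + θ := add_pos hβ₀ hθ
  have hβwθ : 0 ≤ βw + θ := by linarith
  obtain ⟨hpos, hlt⟩ := mem_Ioo_of_quadratic_eq_zero (coeffA_pos hβ₀ hβ₀θ hβwθ)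
    (coeffB_neg hβ₀ hβw.le hβ₀θ).le (coeffC_pos hβ₀ hβw.le hβ₀θ) hv
  exact ⟨hpos, hlt.le⟩
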